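/- arXiv:2205.08194 — 6 statements merged into one kernel-verified Lean document; each statement's English description precedes it below -/
import Mathlib

section
/- There exist τ > 0 and μ > 0 such that B ᵀΛB − τI ⪯ −I and the block matrix Ω := [[H_clᵀΛH_cl − e^{μ}Λ + τKᵀK, H_clᵀΛB],[BᵀΛH_cl, −I]] is negative definite. -/
open Matrix

lemma key_posDef {n : ℕ} (d : Fin n → ℝ) (hd : ∀ i, 0 < d i) (M : Matrix (Fin n) (Fin n) ℝ)
    (hM : M.IsHermitian) :
    ∃ c : ℝ, 1 < c ∧ (c • diagonal d - M).PosDef := by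
  have hc0 : 0 ≤ ∑ i, ∑ j, |M i j| * (1 / d i + 1 / d j) := by
    refine Finset.sum_nonneg fun i _ => Finset.sum_nonneg fun j _ => ?_
    have := hd i
    have := hd j
    positivity
  refine ⟨(∑ i, ∑ j, |M i j| * (1 / d i + 1 / d j)) + 2, by linarith, ?_⟩
  apply PosDef.of_dotProduct_mulVec_pos
  · have h1 : (diagonal d).IsHermitian := by
      simp [IsHermitian]
    refine IsHermitian.sub ?_ hM
    simp only [IsHermitian, conjTranspose_smul, h1.eq, star_trivial]
  intro x hx
  set S : ℝ := ∑ i, d i * x i ^ 2 with hS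
  have hle : ∀ i, d i * x i ^ 2 ≤ S := fun i =>
    Finset.single_le_sum (f := fun i => d i * x i ^ 2)
      (fun j _ => mul_nonneg (hd j).le (sq_nonneg _)) (Finset.mem_univ i)
  have hSpos : 0 < S := by
    obtain ⟨i, hi⟩ := Function.ne_iff.mp hx
    have : 0 < d i * x i ^ 2 := mul_pos (hd i) (by simpa using sq_pos_of_ne_zero hi)
    exact this.trans_le (hle i)
  have hsq : ∀ i, x i ^ 2 ≤ 1 / d i * S := fun i => by
    rw [one_div, inv_mul_eq_div, le_div_iff₀ (hd i)]
    linarith [hle i]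
  have hq : x ⬝ᵥ (M *ᵥ x) ≤ (∑ i, ∑ j, |M i j| * (1 / d i + 1 / d j)) * S := by
    simp only [dotProduct, mulVec, Finset.mul_sum, Finset.sum_mul]
    refine Finset.sum_le_sum fun i _ => Finset.sum_le_sum fun j _ => ?_
    have h1 : |x i * x j| ≤ (1 / d i + 1 / d j) * S := by
      rw [abs_le]
      constructor <;>
        nlinarith [hsq i, hsq j, sq_nonneg (x i + x j), sq_nonneg (x i - x j), sq_nonneg (x i),
          sq_nonneg (x j)]
    calc x i * (M i j * x j) = M i j * (x i * x j) := by ring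
      _ ≤ |M i j * (x i * x j)| := le_abs_self _
      _ = |M i j| * |x i * x j| := abs_mul _ _
      _ ≤ |M i j| * ((1 / d i + 1 / d j) * S) := mul_le_mul_of_nonneg_left h1 (abs_nonneg _)
      _ = _ := by ring
  have hdx : x ⬝ᵥ (diagonal d *ᵥ x) = S := by
    simp only [dotProduct, mulVec_diagonal, hS]
    exact Finset.sum_congr rfl fun i _ => by ring
  rw [star_trivial, sub_mulVec, smul_mulVec, dotProduct_sub, dotProduct_smul, hdx, smul_eq_mul]
  nlinarith

lemma block_posDef {n m : ℕ} (P : Matrix (Fin n) (Fin n) ℝ) (N : Matrix (Fin n) (Fin m) ℝ)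
    (h : (P - N * Nᵀ).PosDef) : (fromBlocks P N Nᵀ 1).PosDef := by
  have hP : P.IsHermitian := by
    have h2 : (N * Nᵀ).IsHermitian := by
      simpa using isHermitian_mul_conjTranspose_self N
    simpa using h.1.add h2
  apply PosDef.of_dotProduct_mulVec_pos
  · rw [isHermitian_fromBlocks_iff]
    exact ⟨hP, by simp, by simp, isHermitian_one⟩
  intro z hz
  obtain ⟨x, y, rfl⟩ : ∃ x y, z = Sum.elim x y := ⟨z ∘ Sum.inl, z ∘ Sum.inr, by simp⟩
  letI : Invertible (1 : Matrix (Fin m) (Fin m) ℝ) := invertibleOne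
  have e := schur_complement_eq₂₂ P N (D := (1 : Matrix (Fin m) (Fin m) ℝ)) x y isHermitian_one
  simp only [conjTranspose_eq_transpose_of_trivial, star_trivial, inv_one, Matrix.mul_one,
    Matrix.one_mul, vecMul_one] at e
  rw [star_trivial, dotProduct_mulVec, e, ← dotProduct_mulVec]
  by_cases hx : x = 0
  · subst hx
    have hy : y ≠ 0 := by
      rintro rfl
      exact hz (by ext i; cases i <;> rfl)
    have := dotProduct_star_self_pos_iff.mpr hy
    simpa using this
  · have h1 := h.dotProduct_mulVec_pos hx
    rw [star_trivial] at h1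
    have h2 := dotProduct_star_self_nonneg (Nᵀ *ᵥ x + y)
    rw [star_trivial] at h2
    linarith

/-- there exist `τ > 0` and `μ > 0` such that `BᵀΛB - τI ⪯ -I` and the block
matrix `Ω = [[H_clᵀΛH_cl - e^μ Λ + τKᵀK, H_clᵀΛB],[BᵀΛH_cl, -I]]` is negative definite. -/
theorem exists_tau_mu_Omega_negdef {n m : ℕ}
    (Λ : Matrix (Fin n) (Fin n) ℝ) (hΛdiag : Λ.IsDiag) (hΛpos : ∀ i, 0 < Λ i i)
    (H : Matrix (Fin n) (Fin n) ℝ) (B : Matrix (Fin n) (Fin m) ℝ)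
    (K : Matrix (Fin m) (Fin n) ℝ) :
    ∃ τ : ℝ, 0 < τ ∧ ∃ μ : ℝ, 0 < μ ∧
      (-(Bᵀ * Λ * B - τ • (1 : Matrix (Fin m) (Fin m) ℝ) + 1)).PosSemidef ∧
      (-(Matrix.fromBlocks
          ((H + B * K)ᵀ * Λ * (H + B * K) - Real.exp μ • Λ + τ • (Kᵀ * K))
          ((H + B * K)ᵀ * Λ * B)
          (Bᵀ * Λ * (H + B * K))
          (-1 : Matrix (Fin m) (Fin m) ℝ))).PosDef := by
  obtain ⟨d, rfl⟩ : ∃ d, Λ = diagonal d := ⟨_, hΛdiag.diagonal_diag.symm⟩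
  have hd : ∀ i, 0 < d i := fun i => by simpa using hΛpos i
  have hsym : ∀ {k l : ℕ} (X : Matrix (Fin n) (Fin k) ℝ) (Y : Matrix (Fin n) (Fin l) ℝ),
      (Xᵀ * diagonal d * Y)ᵀ = Yᵀ * diagonal d * X := by
    intro k l X Y
    simp [transpose_mul, Matrix.mul_assoc]
  obtain ⟨τ, hτ, h1⟩ := key_posDef (n := m) (fun _ => 1) (fun _ => one_pos)
    (Bᵀ * diagonal d * B + 1) (by
      rw [IsHermitian, conjTranspose_eq_transpose_of_trivial, transpose_add, hsym, transpose_one])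
  refine ⟨τ, by linarith, ?_⟩
  set G := H + B * K with hG
  obtain ⟨c, hc, h2⟩ := key_posDef d hd
    (Gᵀ * diagonal d * G + τ • (Kᵀ * K) + (Gᵀ * diagonal d * B) * (Gᵀ * diagonal d * B)ᵀ) (by
      rw [IsHermitian, conjTranspose_eq_transpose_of_trivial, transpose_add, transpose_add, hsym,
        transpose_smul]
      simp only [transpose_mul, transpose_transpose])
  refine ⟨Real.log c, Real.log_pos hc, ?_, ?_⟩
  · convert h1.posSemidef using 1
    rw [diagonal_one]
    abel
  · rw [Real.exp_log (by linarith), fromBlocks_neg, neg_neg, ← hsym G B, ← transpose_neg]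
    apply block_posDef
    convert h2 using 1
    rw [transpose_neg, Matrix.neg_mul, Matrix.mul_neg, neg_neg]
    abel
end

section
/- There exist μ > 0 and ρ ∈ ℝ such that for all continuously differentiable functions X₁, X₂ : [0,1] → ℝⁿ satisfying the boundary condition X_i(0) = H_cl X_i(1) + Bφ(K X_i(1)) for i = 1, 2, setting X̃ := X₁ − X₂, one has ∫₀¹ e^{μz} X̃(z)ᵀ(−Λ X̃′(z) + ρ X̃(z)) dz ≤ 0 (i.e., the operator X ↦ −ΛX_z + ρX, with this boundary condition, is non-accretive with respect to the weighted inner product ⟨X₁, X₂⟩_μ := ∫₀¹ e^{μz} X₁(z)ᵀX₂(z) dz). -/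
open Matrix Set

/-- Componentwise saturation function with saturation levels `ubar`. -/
noncomputable def saturate {m : ℕ} (ubar : Fin m → ℝ) (u : Fin m → ℝ) : Fin m → ℝ :=
  fun i => min |u i| (ubar i) * Real.sign (u i)

/-- Dead-zone nonlinearity `φ(u) = σ(u) - u`. -/
noncomputable def deadzone {m : ℕ} (ubar : Fin m → ℝ) (u : Fin m → ℝ) : Fin m → ℝ :=
  saturate ubar u - u

lemma sat_eq (u a : ℝ) (hu : 0 < u) : min |a| u * Real.sign a = max (-u) (min u a) := by
  rcases lt_trichotomy a 0 with h | h | h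
  · rw [Real.sign_of_neg h, abs_of_neg h, min_eq_right (by linarith : a ≤ u)]
    rcases le_total (-a) u with h2 | h2
    · rw [min_eq_left h2, max_eq_right (by linarith)]; ring
    · rw [min_eq_right h2, max_eq_left (by linarith)]; ring
  · subst h
    simp [hu.le]
  · rw [Real.sign_of_pos h, abs_of_pos h, mul_one, min_comm, max_eq_right]
    exact le_min (by linarith) (by linarith)

lemma sat_lip (u a b : ℝ) (hu : 0 < u) :
    |min |a| u * Real.sign a - min |b| u * Real.sign b| ≤ |a - b| := by
  rw [sat_eq u a hu, sat_eq u b hu]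
  refine (abs_max_sub_max_le_max _ _ _ _).trans ?_
  refine max_le (by simp) ?_
  refine (abs_min_sub_min_le_max _ _ _ _).trans ?_
  exact max_le (by simp) le_rfl

lemma bc_bound {n m : ℕ} (H : Matrix (Fin n) (Fin n) ℝ) (B : Matrix (Fin n) (Fin m) ℝ)
    (K : Matrix (Fin m) (Fin n) ℝ) (ubar : Fin m → ℝ) (hubar : ∀ i, 0 < ubar i)
    (x y x0 y0 : Fin n → ℝ)
    (hx : x0 = (H + B * K).mulVec x + B.mulVec (deadzone ubar (K.mulVec x)))
    (hy : y0 = (H + B * K).mulVec y + B.mulVec (deadzone ubar (K.mulVec y))) (i : Fin n) :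
    |x0 i - y0 i| ≤ ∑ j, (|H i j| + ∑ k, |B i k| * |K k j|) * |x j - y j| := by
  have key : ∀ w : Fin n → ℝ, (H + B * K).mulVec w + B.mulVec (deadzone ubar (K.mulVec w))
      = H.mulVec w + B.mulVec (saturate ubar (K.mulVec w)) := by
    intro w
    rw [deadzone, Matrix.mulVec_sub, Matrix.add_mulVec, Matrix.mulVec_mulVec]
    abel
  rw [key] at hx hy
  have e : x0 i - y0 i = ∑ j, H i j * (x j - y j)
      + ∑ k, B i k * (saturate ubar (K.mulVec x) k - saturate ubar (K.mulVec y) k) := by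
    rw [hx, hy]
    simp only [Pi.add_apply, Matrix.mulVec, dotProduct, mul_sub, Finset.sum_sub_distrib]
    ring
  have h2 : ∀ k, |saturate ubar (K.mulVec x) k - saturate ubar (K.mulVec y) k|
      ≤ ∑ j, |K k j| * |x j - y j| := by
    intro k
    refine (sat_lip _ _ _ (hubar k)).trans ?_
    have : (K.mulVec x) k - (K.mulVec y) k = ∑ j, K k j * (x j - y j) := by
      simp only [Matrix.mulVec, dotProduct, mul_sub, Finset.sum_sub_distrib]
    rw [this]
    refine (Finset.abs_sum_le_sum_abs _ _).trans (le_of_eq ?_)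
    simp only [abs_mul]
  rw [e]
  calc _ ≤ ∑ j, |H i j| * |x j - y j| + ∑ k, |B i k| * ∑ j, |K k j| * |x j - y j| := by
        refine (abs_add_le _ _).trans (add_le_add ?_ ?_)
        · refine (Finset.abs_sum_le_sum_abs _ _).trans (le_of_eq ?_)
          simp only [abs_mul]
        · refine (Finset.abs_sum_le_sum_abs _ _).trans (Finset.sum_le_sum fun k _ => ?_)
          rw [abs_mul]
          exact mul_le_mul_of_nonneg_left (h2 k) (abs_nonneg _)
    _ = _ := by
        simp only [add_mul, Finset.sum_add_distrib, Finset.mul_sum, Finset.sum_mul]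
        congr 1
        rw [Finset.sum_comm]
        simp only [mul_assoc]

lemma energy_bound {n : ℕ} (l : Fin n → ℝ) (hl : ∀ i, 0 < l i) (C : Fin n → Fin n → ℝ)
    (v w : Fin n → ℝ) (h : ∀ i, |v i| ≤ ∑ j, C i j * |w j|) :
    ∑ i, l i * v i ^ 2 ≤
      ((∑ i, l i * ∑ j, C i j ^ 2) * ∑ k, (l k)⁻¹) * ∑ j, l j * w j ^ 2 := by
  have h1 : ∀ i, v i ^ 2 ≤ (∑ j, C i j ^ 2) * ∑ j, w j ^ 2 := by
    intro i
    have := Finset.sum_mul_sq_le_sq_mul_sq Finset.univ (C i) (fun j => |w j|)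
    simp only [sq_abs] at this
    refine le_trans ?_ this
    rw [← sq_abs]
    exact pow_le_pow_left₀ (abs_nonneg _) (h i) 2
  have h2 : ∑ j, w j ^ 2 ≤ (∑ k, (l k)⁻¹) * ∑ j, l j * w j ^ 2 := by
    rw [Finset.mul_sum]
    refine Finset.sum_le_sum fun j _ => ?_
    have h3 : (l j)⁻¹ ≤ ∑ k, (l k)⁻¹ :=
      Finset.single_le_sum (f := fun k => (l k)⁻¹)
        (fun k _ => (inv_pos.2 (hl k)).le) (Finset.mem_univ j)
    calc w j ^ 2 = (l j)⁻¹ * (l j * w j ^ 2) := by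
          rw [← mul_assoc, inv_mul_cancel₀ (hl j).ne', one_mul]
      _ ≤ _ := mul_le_mul_of_nonneg_right h3 (mul_nonneg (hl j).le (sq_nonneg _))
  calc ∑ i, l i * v i ^ 2 ≤ ∑ i, l i * ((∑ j, C i j ^ 2) * ∑ j, w j ^ 2) :=
        Finset.sum_le_sum fun i _ => mul_le_mul_of_nonneg_left (h1 i) (hl i).le
    _ = (∑ i, l i * ∑ j, C i j ^ 2) * ∑ j, w j ^ 2 := by
        rw [Finset.sum_mul]; simp only [mul_assoc]
    _ ≤ _ := by
        rw [mul_assoc]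
        exact mul_le_mul_of_nonneg_left h2 (Finset.sum_nonneg fun i _ =>
          mul_nonneg (hl i).le (Finset.sum_nonneg fun j _ => sq_nonneg _))

/-- there exist `μ > 0` and `ρ ∈ ℝ` such that for all `C¹` functions
`X₁, X₂ : [0,1] → ℝⁿ` satisfying the saturated boundary condition, with `X̃ = X₁ - X₂`,
one has `∫₀¹ e^{μ z} X̃(z)ᵀ (-Λ X̃′(z) + ρ X̃(z)) dz ≤ 0`, i.e. the operator
`X ↦ -ΛX_z + ρX` with this boundary condition is non-accretive for `⟨·,·⟩_μ`. -/
theorem nonaccretive {n m : ℕ}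
    (Λ : Matrix (Fin n) (Fin n) ℝ) (hΛdiag : Λ.IsDiag) (hΛpos : ∀ i, 0 < Λ i i)
    (H : Matrix (Fin n) (Fin n) ℝ) (B : Matrix (Fin n) (Fin m) ℝ)
    (K : Matrix (Fin m) (Fin n) ℝ)
    (ubar : Fin m → ℝ) (hubar : ∀ i, 0 < ubar i) :
    ∃ μ : ℝ, 0 < μ ∧ ∃ ρ : ℝ,
      ∀ (X₁ X₂ : ℝ → Fin n → ℝ) (X₁' X₂' : ℝ → Fin n → ℝ),
        (∀ z ∈ Icc (0:ℝ) 1, HasDerivWithinAt X₁ (X₁' z) (Icc (0:ℝ) 1) z) →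
        (∀ z ∈ Icc (0:ℝ) 1, HasDerivWithinAt X₂ (X₂' z) (Icc (0:ℝ) 1) z) →
        ContinuousOn X₁' (Icc (0:ℝ) 1) →
        ContinuousOn X₂' (Icc (0:ℝ) 1) →
        (X₁ 0 = (H + B * K).mulVec (X₁ 1) + B.mulVec (deadzone ubar (K.mulVec (X₁ 1)))) →
        (X₂ 0 = (H + B * K).mulVec (X₂ 1) + B.mulVec (deadzone ubar (K.mulVec (X₂ 1)))) →
        ∫ z in (0:ℝ)..1, Real.exp (μ * z) *
            ((X₁ z - X₂ z) ⬝ᵥ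
              (-(Λ.mulVec (X₁' z - X₂' z)) + ρ • (X₁ z - X₂ z))) ≤ 0 := by
  set l : Fin n → ℝ := fun i => Λ i i with hl
  have hlp : ∀ i, 0 < l i := hΛpos
  set C : Fin n → Fin n → ℝ := fun i j => |H i j| + ∑ k, |B i k| * |K k j| with hC
  set M : ℝ := (∑ i, l i * ∑ j, C i j ^ 2) * ∑ k, (l k)⁻¹ with hM
  have hM0 : 0 ≤ M := mul_nonneg
    (Finset.sum_nonneg fun i _ =>
      mul_nonneg (hlp i).le (Finset.sum_nonneg fun j _ => sq_nonneg _))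
    (Finset.sum_nonneg fun k _ => (inv_pos.2 (hlp k)).le)
  have hΛv : ∀ (w : Fin n → ℝ) (i : Fin n), Λ.mulVec w i = l i * w i := by
    intro w i
    rw [← hΛdiag.diagonal_diag, Matrix.mulVec_diagonal]
    rfl
  refine ⟨M + 1, by linarith, -((M + 1) / 2 * ∑ i, l i), ?_⟩
  intro X₁ X₂ X₁' X₂' hd1 hd2 hc1 hc2 hb1 hb2
  set μ := M + 1 with hμ
  set ρ := -(μ / 2 * ∑ i, l i) with hρ
  have hcx1 : ContinuousOn X₁ (Icc 0 1) := fun z hz => (hd1 z hz).continuousWithinAt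
  have hcx2 : ContinuousOn X₂ (Icc 0 1) := fun z hz => (hd2 z hz).continuousWithinAt
  have hE := energy_bound l hlp C (X₁ 0 - X₂ 0) (X₁ 1 - X₂ 1)
    (fun i => bc_bound H B K ubar hubar _ _ _ _ hb1 hb2 i)
  rw [← hM] at hE
  have hform : ∀ z, (X₁ z - X₂ z) ⬝ᵥ
        (-(Λ.mulVec (X₁' z - X₂' z)) + ρ • (X₁ z - X₂ z)) =
      ∑ i, (X₁ z i - X₂ z i) * (-(l i * (X₁' z i - X₂' z i)) + ρ * (X₁ z i - X₂ z i)) := by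
    intro z
    simp only [dotProduct, Pi.add_apply, Pi.neg_apply, hΛv, Pi.sub_apply, Pi.smul_apply,
      smul_eq_mul]
  simp only [hform]
  set g : ℝ → ℝ := fun z => -(Real.exp (μ * z) * ∑ i, l i / 2 * (X₁ z i - X₂ z i) ^ 2) with hg
  have c1 : ∀ i, ContinuousOn (fun z => X₁ z i) (Icc 0 1) := continuousOn_pi.1 hcx1
  have c2 : ∀ i, ContinuousOn (fun z => X₂ z i) (Icc 0 1) := continuousOn_pi.1 hcx2
  have c3 : ∀ i, ContinuousOn (fun z => X₁' z i) (Icc 0 1) := continuousOn_pi.1 hc1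
  have c4 : ∀ i, ContinuousOn (fun z => X₂' z i) (Icc 0 1) := continuousOn_pi.1 hc2
  have hgc : ContinuousOn g (Icc 0 1) := by
    refine ContinuousOn.neg (ContinuousOn.mul (by fun_prop) ?_)
    refine continuousOn_finsetSum _ fun i _ => ?_
    exact continuousOn_const.mul (((c1 i).sub (c2 i)).pow 2)
  have hfc : ContinuousOn (fun z => Real.exp (μ * z) *
      ∑ i, (X₁ z i - X₂ z i) * (-(l i * (X₁' z i - X₂' z i)) + ρ * (X₁ z i - X₂ z i)))
      (Icc 0 1) := by
    refine ContinuousOn.mul (by fun_prop) ?_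
    refine continuousOn_finsetSum _ fun i _ => ?_
    exact ((c1 i).sub (c2 i)).mul ((continuousOn_const.mul ((c3 i).sub (c4 i))).neg.add
      (continuousOn_const.mul ((c1 i).sub (c2 i))))
  have hgd : ∀ z ∈ Ioo (0:ℝ) 1, HasDerivWithinAt g
      (-(Real.exp (μ * z) * (μ * 1) * (∑ i, l i / 2 * (X₁ z i - X₂ z i) ^ 2) +
        Real.exp (μ * z) * ∑ i, l i / 2 * (((2 : ℕ) : ℝ) * (X₁ z i - X₂ z i) ^ (2 - 1) *
          (X₁' z i - X₂' z i)))) (Ioi z) z := by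
    intro z hz
    have hz' := Ioo_subset_Icc_self hz
    have n1 := Icc_mem_nhds hz.1 hz.2
    have d1 := hasDerivAt_pi.1 ((hd1 z hz').hasDerivAt n1)
    have d2 := hasDerivAt_pi.1 ((hd2 z hz').hasDerivAt n1)
    refine HasDerivAt.hasDerivWithinAt ?_
    refine HasDerivAt.fun_neg (HasDerivAt.fun_mul ?_ ?_)
    · exact ((hasDerivAt_id z).const_mul μ).exp
    · refine HasDerivAt.fun_sum fun i _ => ?_
      exact (((d1 i).fun_sub (d2 i)).fun_pow 2).const_mul _
  have hmain := intervalIntegral.integral_le_sub_of_hasDeriv_right_of_le zero_le_one hgc hgd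
    (hfc.integrableOn_Icc) (by
      intro z hz
      rw [mul_assoc, ← mul_add, ← mul_neg]
      refine mul_le_mul_of_nonneg_left ?_ (Real.exp_pos _).le
      rw [Finset.mul_sum, ← Finset.sum_add_distrib, ← Finset.sum_neg_distrib]
      refine Finset.sum_le_sum fun i _ => ?_
      have hi : l i ≤ ∑ k, l k :=
        Finset.single_le_sum (f := l) (fun k _ => (hlp k).le) (Finset.mem_univ i)
      have h5 : 0 ≤ μ / 2 * (∑ k, l k - l i) * (X₁ z i - X₂ z i) ^ 2 :=
        mul_nonneg (mul_nonneg (by linarith) (by linarith)) (sq_nonneg _)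
      rw [hρ]
      push_cast
      norm_num
      nlinarith [h5])
  refine hmain.trans ?_
  have hexp : M ≤ Real.exp μ := by
    have := Real.add_one_le_exp μ
    linarith
  have hS : 0 ≤ ∑ j, l j * (X₁ 1 - X₂ 1) j ^ 2 :=
    Finset.sum_nonneg fun j _ => mul_nonneg (hlp j).le (sq_nonneg _)
  have hE2 := hE.trans (mul_le_mul_of_nonneg_right hexp hS)
  have hhalf : ∀ w : Fin n → ℝ, ∑ i, l i / 2 * w i ^ 2 = (∑ i, l i * w i ^ 2) / 2 := by
    intro w
    rw [Finset.sum_div]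
    exact Finset.sum_congr rfl fun i _ => by ring
  have a0 := hhalf (X₁ 0 - X₂ 0)
  have a1 := hhalf (X₁ 1 - X₂ 1)
  simp only [Pi.sub_apply] at a0 a1 hE2
  simp only [hg, a0, a1, mul_zero, mul_one, Real.exp_zero, one_mul]
  linarith
end

section
/- Let E and F be real normed vector spaces, let c₁, c₂, c₃, χ > 0, let V : E → ℝ be Fréchet differentiable and satisfy c₁‖ζ‖² ≤ V(ζ) ≤ c₂‖ζ‖² for all ζ ∈ E. Let T > 0, let X : [0,T] → E be differentiable, and let d : [0,T] → F be continuous, and assume that for all t ∈ [0,T], DV(X(t))(X′(t)) ≤ −c₃ V(X(t)) + χ²‖d(t)‖². Then for all t ∈ [0,T], ‖X(t)‖ ≤ e^{−(c₃/2)t}·√(c₂/c₁)·‖X(0)‖ + (χ/√c₁)·√(∫₀ᵗ ‖d(θ)‖² dθ). -/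
open Set

/-- abstract dissipation inequality implies the ISS bound
`‖X(t)‖ ≤ e^{-(c₃/2)t} √(c₂/c₁) ‖X(0)‖ + (χ/√c₁) √(∫₀ᵗ ‖d(θ)‖² dθ)`. -/
theorem dissipation_implies_ISS
    {E F : Type*} [NormedAddCommGroup E] [NormedSpace ℝ E]
    [NormedAddCommGroup F] [NormedSpace ℝ F]
    (c₁ c₂ c₃ χ : ℝ) (hc₁ : 0 < c₁) (hc₂ : 0 < c₂) (hc₃ : 0 < c₃) (hχ : 0 < χ)
    (V : E → ℝ) (V' : E → E →L[ℝ] ℝ)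
    (hV : ∀ x : E, HasFDerivAt V (V' x) x)
    (hVbound : ∀ ζ : E, c₁ * ‖ζ‖ ^ 2 ≤ V ζ ∧ V ζ ≤ c₂ * ‖ζ‖ ^ 2)
    (T : ℝ) (hT : 0 < T)
    (X : ℝ → E) (X' : ℝ → E)
    (hX : ∀ t ∈ Icc (0:ℝ) T, HasDerivWithinAt X (X' t) (Icc (0:ℝ) T) t)
    (d : ℝ → F) (hd : ContinuousOn d (Icc (0:ℝ) T))
    (hdiss : ∀ t ∈ Icc (0:ℝ) T, V' (X t) (X' t) ≤ -c₃ * V (X t) + χ ^ 2 * ‖d t‖ ^ 2) :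
    ∀ t ∈ Icc (0:ℝ) T,
      ‖X t‖ ≤ Real.exp (-(c₃ / 2) * t) * Real.sqrt (c₂ / c₁) * ‖X 0‖ +
        (χ / Real.sqrt c₁) * Real.sqrt (∫ θ in (0:ℝ)..t, ‖d θ‖ ^ 2) := by
  obtain ⟨g, hgc, hg0, hgd⟩ : ∃ g : ℝ → ℝ, Continuous g ∧ (∀ x, 0 ≤ g x) ∧
      ∀ x ∈ Icc (0:ℝ) T, g x = ‖d x‖ ^ 2 := by
    refine ⟨IccExtend hT.le ((Icc (0:ℝ) T).domRestrict (fun x => ‖d x‖ ^ 2)), ?_, ?_, ?_⟩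
    · have h : ContinuousOn (fun x => ‖d x‖ ^ 2) (Icc (0:ℝ) T) := hd.norm.pow 2
      exact (continuousOn_iff_continuous_domRestrict.1 h).Icc_extend'
    · intro x
      simp only [IccExtend, Function.comp, domRestrict_apply]
      positivity
    · intro x hx
      rw [IccExtend_of_mem _ _ hx]
      rfl
  have hI : ∀ t, HasDerivAt (fun u => ∫ θ in (0:ℝ)..u, g θ) (g t) t := fun t =>
    hgc.integral_hasStrictDerivAt 0 t |>.hasDerivAt
  have hv : ∀ t ∈ Icc (0:ℝ) T,
      HasDerivWithinAt (fun s => V (X s)) (V' (X t) (X' t)) (Icc (0:ℝ) T) t := fun t ht =>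
    (hV (X t)).comp_hasDerivWithinAt t (hX t ht)
  have he : ∀ t, HasDerivAt (fun s => Real.exp (c₃ * s)) (Real.exp (c₃ * t) * c₃) t := by
    intro t
    simpa using ((hasDerivAt_id t).const_mul c₃).exp
  have hG : ∀ t ∈ Icc (0:ℝ) T, HasDerivWithinAt
      (fun s => Real.exp (c₃ * s) * (V (X s) - χ ^ 2 * ∫ θ in (0:ℝ)..s, g θ))
      (Real.exp (c₃ * t) * c₃ * (V (X t) - χ ^ 2 * ∫ θ in (0:ℝ)..t, g θ)
        + Real.exp (c₃ * t) * (V' (X t) (X' t) - χ ^ 2 * g t)) (Icc (0:ℝ) T) t := fun t ht =>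
    (he t).hasDerivWithinAt.mul ((hv t ht).sub ((hI t).hasDerivWithinAt.const_mul (χ ^ 2)))
  have hanti := antitoneOn_of_hasDerivWithinAt_nonpos (convex_Icc (0:ℝ) T)
    (fun t ht => (hG t ht).continuousWithinAt)
    (fun t ht => (hG t (interior_subset ht)).mono interior_subset) (by
      intro t ht
      have ht' := interior_subset ht
      have h1 := hdiss t ht'
      rw [← hgd t ht'] at h1
      have h2 : 0 ≤ ∫ θ in (0:ℝ)..t, g θ :=
        intervalIntegral.integral_nonneg ht'.1 (fun x _ => hg0 x)
      have h3 : 0 ≤ c₃ * (χ ^ 2 * ∫ θ in (0:ℝ)..t, g θ) := by positivity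
      have h4 := Real.exp_pos (c₃ * t)
      have h5 : c₃ * (V (X t) - χ ^ 2 * ∫ θ in (0:ℝ)..t, g θ)
        + (V' (X t) (X' t) - χ ^ 2 * g t) ≤ 0 := by linarith
      have h6 := mul_nonpos_of_nonneg_of_nonpos h4.le h5
      linarith)
  intro t ht
  have hIeq : (∫ θ in (0:ℝ)..t, ‖d θ‖ ^ 2) = ∫ θ in (0:ℝ)..t, g θ := by
    apply intervalIntegral.integral_congr
    intro x hx
    rw [uIcc_of_le ht.1] at hx
    exact (hgd x ⟨hx.1, hx.2.trans ht.2⟩).symm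
  rw [hIeq]
  have hmain := hanti (left_mem_Icc.2 hT.le) ht ht.1
  have hI0 : 0 ≤ ∫ θ in (0:ℝ)..t, g θ :=
    intervalIntegral.integral_nonneg ht.1 (fun x _ => hg0 x)
  simp only [mul_zero, Real.exp_zero, intervalIntegral.integral_same, sub_zero, one_mul] at hmain
  generalize (∫ θ in (0:ℝ)..t, g θ) = I at hmain hI0 ⊢
  have hmul := mul_le_mul_of_nonneg_left hmain (Real.exp_pos (-(c₃ * t))).le
  rw [← mul_assoc, ← Real.exp_add, neg_add_cancel, Real.exp_zero, one_mul] at hmul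
  have h0 := mul_le_mul_of_nonneg_left (hVbound (X 0)).2 (Real.exp_pos (-(c₃ * t))).le
  have h1 := (hVbound (X t)).1
  have ha : (Real.exp (-(c₃ / 2) * t) * Real.sqrt (c₂ / c₁) * ‖X 0‖) ^ 2
      = Real.exp (-(c₃ * t)) * (c₂ * ‖X 0‖ ^ 2) / c₁ := by
    rw [mul_pow, mul_pow, Real.sq_sqrt (by positivity), ← Real.exp_nat_mul]
    have : ((2:ℕ):ℝ) * (-(c₃ / 2) * t) = -(c₃ * t) := by push_cast; ring
    rw [this]; ring
  have hb : ((χ / Real.sqrt c₁) * Real.sqrt I) ^ 2 = χ ^ 2 * I / c₁ := by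
    rw [mul_pow, div_pow, Real.sq_sqrt hc₁.le, Real.sq_sqrt hI0]; ring
  have ha0 : 0 ≤ Real.exp (-(c₃ / 2) * t) * Real.sqrt (c₂ / c₁) * ‖X 0‖ := by positivity
  have hb0 : 0 ≤ (χ / Real.sqrt c₁) * Real.sqrt I := by positivity
  have hx : ‖X t‖ ^ 2 ≤ Real.exp (-(c₃ * t)) * (c₂ * ‖X 0‖ ^ 2) / c₁ + χ ^ 2 * I / c₁ := by
    rw [← add_div, le_div_iff₀ hc₁]
    linarith
  rw [← ha, ← hb] at hx
  refine abs_le_of_sq_le_sq' ?_ (add_nonneg ha0 hb0) |>.2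
  nlinarith [mul_nonneg ha0 hb0]
end

section
/- Let P ∈ ℝ^{n×n} and T ∈ ℝ^{m×m} be diagonal positive definite matrices and μ > 0, and suppose the block matrix [[H_clᵀPΛH_cl − e^{−μ}PΛ, H_clᵀPΛB − KᵀT],[BᵀPΛH_cl − TK, BᵀPΛB − 2T]] is negative semidefinite. Then for every ξ ∈ ℝⁿ, (H_cl ξ + Bφ(Kξ))ᵀ PΛ (H_cl ξ + Bφ(Kξ)) ≤ e^{−μ} ξᵀ PΛ ξ. -/
open Matrix

lemma deadzone_sector {m : ℕ} (ubar : Fin m → ℝ) (hubar : ∀ i, 0 < ubar i) (u : Fin m → ℝ)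
    (i : Fin m) : deadzone ubar u i * (deadzone ubar u i + u i) ≤ 0 := by
  simp only [deadzone, saturate, Pi.sub_apply]
  have hb := hubar i
  rcases lt_trichotomy (u i) 0 with h | h | h
  · rw [Real.sign_of_neg h, abs_of_neg h]
    have h1 : 0 ≤ min (-u i) (ubar i) := le_min (by linarith) hb.le
    have h2 : min (-u i) (ubar i) ≤ -u i := min_le_left _ _
    nlinarith
  · simp [h]
  · rw [Real.sign_of_pos h, abs_of_pos h]
    have h1 : 0 ≤ min (u i) (ubar i) := le_min h.le hb.le
    have h2 : min (u i) (ubar i) ≤ u i := min_le_left _ _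
    nlinarith

/-- if the LMI
`[[H_clᵀPΛH_cl - e^{-μ}PΛ, H_clᵀPΛB - KᵀT],[BᵀPΛH_cl - TK, BᵀPΛB - 2T]] ⪯ 0` holds, then
the boundary term satisfies `(H_clξ + Bφ(Kξ))ᵀPΛ(H_clξ + Bφ(Kξ)) ≤ e^{-μ} ξᵀPΛξ`. -/
theorem boundary_quadratic_bound {n m : ℕ}
    (Λ : Matrix (Fin n) (Fin n) ℝ) (hΛdiag : Λ.IsDiag) (hΛpos : ∀ i, 0 < Λ i i)
    (H : Matrix (Fin n) (Fin n) ℝ) (B : Matrix (Fin n) (Fin m) ℝ)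
    (K : Matrix (Fin m) (Fin n) ℝ)
    (ubar : Fin m → ℝ) (hubar : ∀ i, 0 < ubar i)
    (P : Matrix (Fin n) (Fin n) ℝ) (hPdiag : P.IsDiag) (hPpos : ∀ i, 0 < P i i)
    (T : Matrix (Fin m) (Fin m) ℝ) (hTdiag : T.IsDiag) (hTpos : ∀ i, 0 < T i i)
    (μ : ℝ) (hμ : 0 < μ)
    (hLMI : (-(Matrix.fromBlocks
        ((H + B * K)ᵀ * P * Λ * (H + B * K) - Real.exp (-μ) • (P * Λ))
        ((H + B * K)ᵀ * P * Λ * B - Kᵀ * T)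
        (Bᵀ * P * Λ * (H + B * K) - T * K)
        (Bᵀ * P * Λ * B - 2 • T))).PosSemidef) :
    ∀ ξ : Fin n → ℝ,
      ((H + B * K).mulVec ξ + B.mulVec (deadzone ubar (K.mulVec ξ))) ⬝ᵥ
          (P * Λ).mulVec ((H + B * K).mulVec ξ + B.mulVec (deadzone ubar (K.mulVec ξ))) ≤
        Real.exp (-μ) * (ξ ⬝ᵥ (P * Λ).mulVec ξ) := by
  intro ξ
  have hsec := deadzone_sector ubar hubar (K.mulVec ξ)
  generalize deadzone ubar (K.mulVec ξ) = p at hsec ⊢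
  have hq := hLMI.dotProduct_mulVec_nonneg (Sum.elim ξ p)
  generalize H + B * K = A at hq ⊢
  have hT : ∀ v, T.mulVec v = fun i => T i i * v i := by
    intro v
    ext i
    rw [Matrix.mulVec, dotProduct]
    apply Finset.sum_eq_single_of_mem i (Finset.mem_univ i)
    intro j _ hj
    rw [hTdiag hj.symm, zero_mul]
  have e1 : (K.mulVec ξ) ⬝ᵥ T.mulVec p = p ⬝ᵥ T.mulVec (K.mulVec ξ) := by
    rw [hT, hT]
    simp only [dotProduct]
    exact Finset.sum_congr rfl fun i _ => by ring
  have e2 : p ⬝ᵥ T.mulVec p + p ⬝ᵥ T.mulVec (K.mulVec ξ) ≤ 0 := by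
    rw [hT, hT]
    simp only [dotProduct]
    rw [← Finset.sum_add_distrib]
    apply Finset.sum_nonpos
    intro i _
    have := mul_nonpos_of_nonneg_of_nonpos (hTpos i).le (hsec i)
    linarith
  have tr : ∀ {a b : ℕ} (M : Matrix (Fin a) (Fin b) ℝ) (x : Fin b → ℝ) (y : Fin a → ℝ),
      x ⬝ᵥ Mᵀ.mulVec y = M.mulVec x ⬝ᵥ y := by
    intro a b M x y
    rw [Matrix.dotProduct_mulVec, Matrix.vecMul_transpose]
  rw [star_trivial, Matrix.neg_mulVec, dotProduct_neg, Matrix.fromBlocks_mulVec,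
    sumElim_dotProduct_sumElim] at hq
  simp only [Sum.elim_comp_inl, Sum.elim_comp_inr, Matrix.sub_mulVec, Matrix.smul_mulVec,
    dotProduct_add, dotProduct_sub, dotProduct_smul, ← Matrix.mulVec_mulVec, tr, e1,
    smul_eq_mul, two_nsmul, Matrix.add_mulVec] at hq
  simp only [Matrix.mulVec_add, dotProduct_add, add_dotProduct, ← Matrix.mulVec_mulVec]
  linarith
end

section
/- Suppose there exist a diagonal positive definite P ∈ ℝ^{n×n}, a diagonal positive definite T ∈ ℝ^{m×m}, scalars μ, χ, α > 0, and a symmetric positive definite Γ ∈ ℝ^{n×n} such that: (C1) [[H_clᵀPΛH_cl − e^{−μ}PΛ, H_clᵀPΛB − KᵀT],[BᵀPΛH_cl − TK, BᵀPΛB − 2T]] is negative semidefinite; (C2) [[Γ, PN],[NᵀP, χ²I]] is positive semidefinite; (C3) P(αI − μΛ) + Γ is negative semidefinite. Then for every continuously differentiable X : [0,1] → ℝⁿ satisfying X(0) = H_cl X(1) + Bφ(K X(1)) and every continuous d : [0,1] → ℝ^q, one has ∫₀¹ e^{−μz}(−2 X′(z)ᵀ Λ P X(z) + 2 d(z)ᵀ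 Nᵀ P X(z)) dz ≤ −α ∫₀¹ e^{−μz} X(z)ᵀ P X(z) dz + χ² ∫₀¹ |d(z)|² dz. -/
open Matrix Set

/-- The Euclidean norm on `ℝ^q`. -/
noncomputable def enorm' {q : ℕ} (x : Fin q → ℝ) : ℝ := Real.sqrt (∑ i, (x i) ^ 2)


lemma aux_sector {u ub t : ℝ} (hub : 0 < ub) (ht : 0 < t) :
    (min |u| ub * Real.sign u - u) * (t * (min |u| ub * Real.sign u)) ≤ 0 := by
  have key : (min |u| ub * Real.sign u - u) * (min |u| ub * Real.sign u) ≤ 0 := by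
    rcases lt_trichotomy u 0 with h | h | h
    · rw [Real.sign_of_neg h, abs_of_neg h]
      have h1 : min (-u) ub ≤ -u := min_le_left _ _
      have h2 : 0 < min (-u) ub := lt_min (by linarith) hub
      nlinarith
    · subst h; simp
    · rw [Real.sign_of_pos h, abs_of_pos h]
      have h1 : min u ub ≤ u := min_le_left _ _
      have h2 : 0 < min u ub := lt_min h hub
      nlinarith
  nlinarith

lemma aux_psd {ι : Type*} [Fintype ι] {M : Matrix ι ι ℝ} (h : M.PosSemidef) (x : ι → ℝ) :
    0 ≤ x ⬝ᵥ M *ᵥ x := by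
  simpa using h.dotProduct_mulVec_nonneg x

lemma aux_bdry {n m : ℕ} (A : Matrix (Fin n) (Fin n) ℝ) (B : Matrix (Fin n) (Fin m) ℝ)
    (K : Matrix (Fin m) (Fin n) ℝ) (P Λ : Matrix (Fin n) (Fin n) ℝ)
    (T : Matrix (Fin m) (Fin m) ℝ) (hT : Tᵀ = T) (hPL : (P * Λ)ᵀ = P * Λ) (e : ℝ)
    (hC1 : (-(Matrix.fromBlocks
        (Aᵀ * P * Λ * A - e • (P * Λ))
        (Aᵀ * P * Λ * B - Kᵀ * T)
        (Bᵀ * P * Λ * A - T * K)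
        (Bᵀ * P * Λ * B - 2 • T))).PosSemidef) (x : Fin n → ℝ) (f : Fin m → ℝ)
    (hf : f ⬝ᵥ T *ᵥ (f + K *ᵥ x) ≤ 0) :
    (A *ᵥ x + B *ᵥ f) ⬝ᵥ (P * Λ) *ᵥ (A *ᵥ x + B *ᵥ f) - e * (x ⬝ᵥ (P * Λ) *ᵥ x) ≤ 0 := by
  have h := aux_psd hC1 (Sum.elim x f)
  have e1 : ∀ (k l : ℕ) (C : Matrix (Fin n) (Fin k) ℝ) (D : Matrix (Fin n) (Fin l) ℝ) (y z),
      y ⬝ᵥ (Cᵀ * P * Λ * D) *ᵥ z = (C *ᵥ y) ⬝ᵥ (P * Λ) *ᵥ (D *ᵥ z) := by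
    intro k l C D y z
    rw [Matrix.mul_assoc, Matrix.mul_assoc, ← Matrix.mulVec_mulVec, Matrix.dotProduct_mulVec,
      Matrix.vecMul_transpose, ← Matrix.mul_assoc, Matrix.mulVec_mulVec]
  have e2 : x ⬝ᵥ (Kᵀ * T) *ᵥ f = f ⬝ᵥ T *ᵥ (K *ᵥ x) := by
    rw [← Matrix.mulVec_mulVec, Matrix.dotProduct_mulVec,
      Matrix.vecMul_transpose, Matrix.dotProduct_mulVec, dotProduct_comm, ← Matrix.mulVec_transpose,
      hT, Matrix.dotProduct_mulVec, ← Matrix.mulVec_transpose, hT, dotProduct_comm]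
  have e3 : f ⬝ᵥ (T * K) *ᵥ x = f ⬝ᵥ T *ᵥ (K *ᵥ x) := by rw [Matrix.mulVec_mulVec]
  rw [Matrix.neg_mulVec, Matrix.fromBlocks_mulVec, dotProduct_neg, sumElim_dotProduct_sumElim] at h
  simp only [Sum.elim_comp_inl, Sum.elim_comp_inr, Matrix.sub_mulVec, dotProduct_add,
    dotProduct_sub, e1, e2, Matrix.smul_mulVec, dotProduct_smul, smul_eq_mul, two_smul, Matrix.add_mulVec, e3,
    Matrix.mulVec_add, add_dotProduct] at h hf ⊢
  linarith

lemma aux_c2 {n q : ℕ} (P Γ : Matrix (Fin n) (Fin n) ℝ) (N : Matrix (Fin n) (Fin q) ℝ) (χ : ℝ)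
    (hP : Pᵀ = P)
    (hC2 : (Matrix.fromBlocks Γ (P * N) (Nᵀ * P)
        (χ ^ 2 • (1 : Matrix (Fin q) (Fin q) ℝ))).PosSemidef) (x : Fin n → ℝ) (d : Fin q → ℝ) :
    2 * (d ⬝ᵥ (Nᵀ * P) *ᵥ x) ≤ x ⬝ᵥ Γ *ᵥ x + χ ^ 2 * enorm' d ^ 2 := by
  have h := aux_psd hC2 (Sum.elim x (-d))
  have e2 : x ⬝ᵥ (P * N) *ᵥ d = d ⬝ᵥ (Nᵀ * P) *ᵥ x := by
    rw [Matrix.dotProduct_mulVec, ← Matrix.mulVec_transpose, Matrix.transpose_mul, hP,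
      dotProduct_comm]
  have e3 : enorm' d ^ 2 = d ⬝ᵥ d := by
    unfold enorm'
    rw [Real.sq_sqrt (Finset.sum_nonneg fun i _ => sq_nonneg _)]
    simp [dotProduct, sq]
  rw [Matrix.fromBlocks_mulVec, sumElim_dotProduct_sumElim] at h
  simp only [Sum.elim_comp_inl, Sum.elim_comp_inr, dotProduct_add, Matrix.mulVec_neg, 
    dotProduct_neg, neg_dotProduct, e2, Matrix.smul_mulVec, dotProduct_smul, smul_eq_mul,
    Matrix.one_mulVec] at h
  rw [e3]
  linarith

/-- under the matrix inequalities (C1), (C2), (C3), every `C¹` function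
`X : [0,1] → ℝⁿ` satisfying the saturated boundary condition and every continuous
`d : [0,1] → ℝ^q` satisfy the dissipation inequality
`∫₀¹ e^{-μz}(-2X′ᵀΛPX + 2dᵀNᵀPX) dz ≤ -α∫₀¹ e^{-μz} XᵀPX dz + χ²∫₀¹ |d|² dz`. -/
theorem dissipation_inequality {n m q : ℕ}
    (Λ : Matrix (Fin n) (Fin n) ℝ) (hΛdiag : Λ.IsDiag) (hΛpos : ∀ i, 0 < Λ i i)
    (H : Matrix (Fin n) (Fin n) ℝ) (B : Matrix (Fin n) (Fin m) ℝ)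
    (N : Matrix (Fin n) (Fin q) ℝ) (K : Matrix (Fin m) (Fin n) ℝ)
    (ubar : Fin m → ℝ) (hubar : ∀ i, 0 < ubar i)
    (P : Matrix (Fin n) (Fin n) ℝ) (hPdiag : P.IsDiag) (hPpos : ∀ i, 0 < P i i)
    (T : Matrix (Fin m) (Fin m) ℝ) (hTdiag : T.IsDiag) (hTpos : ∀ i, 0 < T i i)
    (μ χ α : ℝ) (hμ : 0 < μ) (hχ : 0 < χ) (hα : 0 < α)
    (Γ : Matrix (Fin n) (Fin n) ℝ) (hΓsymm : Γ.IsSymm) (hΓpos : Γ.PosDef)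
    (hC1 : (-(Matrix.fromBlocks
        ((H + B * K)ᵀ * P * Λ * (H + B * K) - Real.exp (-μ) • (P * Λ))
        ((H + B * K)ᵀ * P * Λ * B - Kᵀ * T)
        (Bᵀ * P * Λ * (H + B * K) - T * K)
        (Bᵀ * P * Λ * B - 2 • T))).PosSemidef)
    (hC2 : (Matrix.fromBlocks Γ (P * N) (Nᵀ * P)
        (χ ^ 2 • (1 : Matrix (Fin q) (Fin q) ℝ))).PosSemidef)
    (hC3 : (-(P * (α • (1 : Matrix (Fin n) (Fin n) ℝ) - μ • Λ) + Γ)).PosSemidef)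
    (X X' : ℝ → Fin n → ℝ)
    (hX : ∀ z ∈ Icc (0:ℝ) 1, HasDerivWithinAt X (X' z) (Icc (0:ℝ) 1) z)
    (hX' : ContinuousOn X' (Icc (0:ℝ) 1))
    (hbc : X 0 = (H + B * K).mulVec (X 1) + B.mulVec (deadzone ubar (K.mulVec (X 1))))
    (d : ℝ → Fin q → ℝ) (hd : ContinuousOn d (Icc (0:ℝ) 1)) :
    ∫ z in (0:ℝ)..1, Real.exp (-μ * z) *
        (-2 * (X' z ⬝ᵥ (Λ * P).mulVec (X z)) + 2 * (d z ⬝ᵥ (Nᵀ * P).mulVec (X z))) ≤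
      -α * (∫ z in (0:ℝ)..1, Real.exp (-μ * z) * (X z ⬝ᵥ P.mulVec (X z))) +
        χ ^ 2 * ∫ z in (0:ℝ)..1, enorm' (d z) ^ 2 := by
  have hPT : Pᵀ = P := by rw [← hPdiag.diagonal_diag]; simp
  have hTT : Tᵀ = T := by rw [← hTdiag.diagonal_diag]; simp
  have hcomm : Λ * P = P * Λ := by
    rw [← hPdiag.diagonal_diag, ← hΛdiag.diagonal_diag]; simp [mul_comm]
  have hPLT : (P * Λ)ᵀ = P * Λ := by
    rw [← hPdiag.diagonal_diag, ← hΛdiag.diagonal_diag]; simp [mul_comm]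
  set V : (Fin n → ℝ) → ℝ := fun x => x ⬝ᵥ (P * Λ) *ᵥ x with hV
  have hXc : ContinuousOn X (Icc 0 1) := fun z hz => (hX z hz).continuousWithinAt
  -- boundary term
  have hb : V (X 0) - Real.exp (-μ) * V (X 1) ≤ 0 := by
    rw [hbc]
    apply aux_bdry _ _ K P Λ T hTT hPLT _ hC1
    have e : deadzone ubar (K *ᵥ X 1) + K *ᵥ X 1 = saturate ubar (K *ᵥ X 1) := by
      simp [deadzone]
    rw [e, ← hTdiag.diagonal_diag]
    simp only [dotProduct, Matrix.mulVec_diagonal]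
    exact Finset.sum_nonpos fun i _ => aux_sector (hubar i) (hTpos i)
  -- derivative
  have hXi : ∀ z ∈ Ioo (0:ℝ) 1, HasDerivAt X (X' z) z := fun z hz =>
    (hX z (Ioo_subset_Icc_self hz)).hasDerivAt (Icc_mem_nhds hz.1 hz.2)
  have hVd : ∀ z ∈ Ioo (0:ℝ) 1, HasDerivAt (fun z => Real.exp (-μ * z) * V (X z))
      (Real.exp (-μ * z) * (2 * (X' z ⬝ᵥ (P * Λ) *ᵥ (X z)) - μ * V (X z))) z := by
    intro z hz
    have h1 : HasDerivAt (fun z => V (X z)) (2 * (X' z ⬝ᵥ (P * Λ) *ᵥ (X z))) z := by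
      have hVs : ∀ x y, x ⬝ᵥ (P * Λ) *ᵥ y = ∑ i, x i * (P i i * Λ i i * y i) := by
        intro x y
        rw [← hPdiag.diagonal_diag, ← hΛdiag.diagonal_diag]
        simp only [Matrix.diagonal_mul_diagonal, dotProduct, Matrix.mulVec_diagonal]
        simp
      simp only [hV, hVs]
      rw [Finset.mul_sum]
      apply HasDerivAt.fun_sum
      intro i _
      have hi := hasDerivAt_pi.1 (hXi z hz) i
      refine (hi.fun_mul (hi.const_mul (P i i * Λ i i))).congr_deriv ?_
      ring
    have h2 : HasDerivAt (fun z => Real.exp (-μ * z)) (Real.exp (-μ * z) * (-μ)) z := by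
      simpa using ((hasDerivAt_id z).const_mul (-μ)).exp
    refine (h2.fun_mul h1).congr_deriv ?_
    ring
  have hmv : ∀ {k l : ℕ} (M : Matrix (Fin k) (Fin l) ℝ) (f : ℝ → Fin k → ℝ) (g : ℝ → Fin l → ℝ),
      ContinuousOn f (Icc 0 1) → ContinuousOn g (Icc 0 1) →
      ContinuousOn (fun z => f z ⬝ᵥ M *ᵥ g z) (Icc (0:ℝ) 1) := by
    intro k l M f g hf hg
    have : Continuous fun p : (Fin k → ℝ) × (Fin l → ℝ) => p.1 ⬝ᵥ M *ᵥ p.2 := by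
      fun_prop
    exact this.comp_continuousOn (hf.prodMk hg)
  have hexp : ContinuousOn (fun z : ℝ => Real.exp (-μ * z)) (Icc 0 1) := by fun_prop
  have hen : ContinuousOn (fun z => enorm' (d z) ^ 2) (Icc (0:ℝ) 1) := by
    have : Continuous fun p : Fin q → ℝ => enorm' p ^ 2 := by
      unfold enorm'; fun_prop
    exact this.comp_continuousOn hd
  have hint : ∀ {f : ℝ → ℝ}, ContinuousOn f (Icc 0 1) →
      IntervalIntegrable f MeasureTheory.volume 0 1 := fun hf =>
    ContinuousOn.intervalIntegrable_of_Icc zero_le_one hf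
  have hVc := hmv (P * Λ) X X hXc hXc
  have hgc : ContinuousOn (fun z =>
      Real.exp (-μ * z) * (2 * (X' z ⬝ᵥ (P * Λ) *ᵥ (X z)) - μ * V (X z))) (Icc (0:ℝ) 1) :=
    hexp.mul ((continuousOn_const.mul (hmv _ _ _ hX' hXc)).sub (continuousOn_const.mul hVc))
  have hftc := intervalIntegral.integral_eq_sub_of_hasDerivAt_of_le zero_le_one
    (hexp.fun_mul hVc) hVd (hint hgc)
  have hPc := hexp.fun_mul (hmv P X X hXc hXc)
  rw [← intervalIntegral.integral_const_mul, ← intervalIntegral.integral_const_mul,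
    ← intervalIntegral.integral_add (hint ((continuousOn_const (c := -α)).fun_mul hPc))
      (hint ((continuousOn_const (c := χ ^ 2)).fun_mul hen))]
  have hR := (continuousOn_const (c := -α)).fun_mul hPc |>.fun_add
    ((continuousOn_const (c := χ ^ 2)).fun_mul hen)
  have hle : ∀ z ∈ Icc (0:ℝ) 1, Real.exp (-μ * z) *
        (-2 * (X' z ⬝ᵥ (Λ * P).mulVec (X z)) + 2 * (d z ⬝ᵥ (Nᵀ * P).mulVec (X z))) ≤
      (-α * (Real.exp (-μ * z) * (X z ⬝ᵥ P.mulVec (X z))) + χ ^ 2 * enorm' (d z) ^ 2) -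
      Real.exp (-μ * z) * (2 * (X' z ⬝ᵥ (P * Λ) *ᵥ (X z)) - μ * V (X z)) := by
    intro z hz
    have h2 := aux_c2 P Γ N χ hPT hC2 (X z) (d z)
    have h3 := aux_psd hC3 (X z)
    have hE : 0 < Real.exp (-μ * z) := Real.exp_pos _
    have hE1 : Real.exp (-μ * z) ≤ 1 := Real.exp_le_one_iff.2 (by nlinarith [hz.1])
    have hn : 0 ≤ χ ^ 2 * enorm' (d z) ^ 2 := by positivity
    simp only [Matrix.mul_sub, Matrix.mul_smul, Matrix.mul_one, Matrix.neg_mulVec,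
      Matrix.add_mulVec, Matrix.sub_mulVec, Matrix.smul_mulVec, dotProduct_neg, dotProduct_add,
      dotProduct_sub, dotProduct_smul, smul_eq_mul] at h3
    rw [hcomm]
    simp only [hV]
    have h4 := mul_le_mul_of_nonneg_left h2 hE.le
    have h5 := mul_nonneg hE.le h3
    have h6 := mul_le_mul_of_nonneg_right hE1 hn
    linarith
  have hL : ContinuousOn (fun z => Real.exp (-μ * z) *
        (-2 * (X' z ⬝ᵥ (Λ * P).mulVec (X z)) + 2 * (d z ⬝ᵥ (Nᵀ * P).mulVec (X z))))
        (Icc (0:ℝ) 1) :=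
    hexp.mul ((continuousOn_const.mul (hmv _ _ _ hX' hXc)).add
      (continuousOn_const.mul (hmv _ _ _ hd hXc)))
  have hfin := intervalIntegral.integral_mono_on zero_le_one (hint hL) (hint (hR.fun_sub hgc)) hle
  refine hfin.trans ?_
  have hs := intervalIntegral.integral_sub (hint hR) (hint hgc)
  refine hs.le.trans ?_
  rw [hftc]
  simp only [mul_one, mul_zero, Real.exp_zero, one_mul]
  simp only [hV] at hb
  have : ∀ a b c : ℝ, b - c ≤ 0 → a - (c - b) ≤ a := fun a b c h => by linarith
  exact this _ _ _ hb
end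

section
/- Let Q ∈ ℝ^{n×n} be diagonal positive definite, S ∈ ℝ^{m×m} diagonal positive definite, W ∈ ℝ^{m×n}, and μ > 0. Set P := Q⁻¹, T := S⁻¹, K := WQ⁻¹, and H_cl := H + BK. Then the 3×3 block matrix [[−QΛ⁻¹, HQ + BW, BS],[(HQ + BW)ᵀ, −e^{−μ}ΛQ, −Wᵀ],[(BS)ᵀ, −W, −2S]] is negative semidefinite if and only if the block matrix [[H_clᵀPΛH_cl − e^{−μ}PΛ, H_clᵀPΛB − KᵀT],[BᵀPΛH_cl − TK, BᵀPΛB − 2T]] is negative semidefinite. -/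
open Matrix

/-- the congruence/Schur-complement equivalence between the 3×3 block LMI of
Corollary 1 (in the variables `Q, S, W`) and the 2×2 block condition (C1) of Theorem 2
(with `P = Q⁻¹`, `T = S⁻¹`, `K = WQ⁻¹`, `H_cl = H + BK`). -/
theorem schur_congruence_equivalence {n m : ℕ}
    (Λ : Matrix (Fin n) (Fin n) ℝ) (hΛdiag : Λ.IsDiag) (hΛpos : ∀ i, 0 < Λ i i)
    (H : Matrix (Fin n) (Fin n) ℝ) (B : Matrix (Fin n) (Fin m) ℝ)
    (Q : Matrix (Fin n) (Fin n) ℝ) (hQdiag : Q.IsDiag) (hQpos : ∀ i, 0 < Q i i)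
    (S : Matrix (Fin m) (Fin m) ℝ) (hSdiag : S.IsDiag) (hSpos : ∀ i, 0 < S i i)
    (W : Matrix (Fin m) (Fin n) ℝ) (μ : ℝ) (hμ : 0 < μ) :
    (-(Matrix.fromBlocks
        (Matrix.fromBlocks
          (-(Q * Λ⁻¹)) (H * Q + B * W)
          ((H * Q + B * W)ᵀ) (-(Real.exp (-μ) • (Λ * Q))))
        (Matrix.fromRows (B * S) (-Wᵀ))
        (Matrix.fromCols ((B * S)ᵀ) (-W))
        (-(2 • S)))).PosSemidef ↔
    (-(Matrix.fromBlocks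
        ((H + B * (W * Q⁻¹))ᵀ * Q⁻¹ * Λ * (H + B * (W * Q⁻¹)) -
          Real.exp (-μ) • (Q⁻¹ * Λ))
        ((H + B * (W * Q⁻¹))ᵀ * Q⁻¹ * Λ * B - (W * Q⁻¹)ᵀ * S⁻¹)
        (Bᵀ * Q⁻¹ * Λ * (H + B * (W * Q⁻¹)) - S⁻¹ * (W * Q⁻¹))
        (Bᵀ * Q⁻¹ * Λ * B - 2 • S⁻¹))).PosSemidef := by
  obtain ⟨l, rfl⟩ : ∃ l, Λ = diagonal l := ⟨_, ((isDiag_iff_diagonal_diag Λ).1 hΛdiag).symm⟩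
  obtain ⟨q, rfl⟩ : ∃ q, Q = diagonal q := ⟨_, ((isDiag_iff_diagonal_diag Q).1 hQdiag).symm⟩
  obtain ⟨s, rfl⟩ : ∃ s, S = diagonal s := ⟨_, ((isDiag_iff_diagonal_diag S).1 hSdiag).symm⟩
  simp only [diagonal_apply_eq] at hΛpos hQpos hSpos
  have inv_diag : ∀ {k : ℕ} (d : Fin k → ℝ), (∀ i, 0 < d i) →
      (diagonal d)⁻¹ = diagonal (fun i => (d i)⁻¹) := by
    intro k d hd
    apply inv_eq_right_inv
    rw [diagonal_mul_diagonal, ← diagonal_one]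
    congr 1
    funext i
    exact mul_inv_cancel₀ (hd i).ne'
  have hA : (diagonal q * (diagonal l)⁻¹).PosDef := by
    rw [inv_diag l hΛpos, diagonal_mul_diagonal]
    exact PosDef.diagonal fun i => mul_pos (hQpos i) (inv_pos.2 (hΛpos i))
  have hAinv : (diagonal q * (diagonal l)⁻¹)⁻¹ = (diagonal q)⁻¹ * diagonal l := by
    rw [inv_diag l hΛpos, inv_diag q hQpos, diagonal_mul_diagonal, diagonal_mul_diagonal,
      inv_diag _ (fun i => mul_pos (hQpos i) (inv_pos.2 (hΛpos i)))]
    congr 1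
    funext i
    simp [mul_comm]
  have hQQ : diagonal q * (diagonal q)⁻¹ = 1 := by
    rw [inv_diag q hQpos, diagonal_mul_diagonal, ← diagonal_one]
    congr 1
    funext i
    exact mul_inv_cancel₀ (hQpos i).ne'
  have hSS : diagonal s * (diagonal s)⁻¹ = 1 := by
    rw [inv_diag s hSpos, diagonal_mul_diagonal, ← diagonal_one]
    congr 1
    funext i
    exact mul_inv_cancel₀ (hSpos i).ne'
  have hQt : ((diagonal q)⁻¹)ᵀ = (diagonal q)⁻¹ := by
    rw [inv_diag q hQpos, diagonal_transpose]
  have hSt : ((diagonal s)⁻¹)ᵀ = (diagonal s)⁻¹ := by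
    rw [inv_diag s hSpos, diagonal_transpose]
  have hQt' : (diagonal q)ᵀ = diagonal q := diagonal_transpose _
  have hSt' : (diagonal s)ᵀ = diagonal s := diagonal_transpose _
  generalize diagonal l = Λ at *
  generalize diagonal q = Q at *
  generalize diagonal s = S at *
  have hQQ' : Q⁻¹ * Q = 1 := mul_eq_one_comm.1 hQQ
  have hSS' : S⁻¹ * S = 1 := mul_eq_one_comm.1 hSS
  clear inv_diag
  have : Invertible (Q * Λ⁻¹) := hA.isUnit.invertible
  let X : Matrix (Fin n) (Fin n ⊕ Fin m) ℝ := fromCols (-(H * Q + B * W)) (-(B * S))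
  let D : Matrix (Fin n ⊕ Fin m) (Fin n ⊕ Fin m) ℝ :=
    fromBlocks (Real.exp (-μ) • (Λ * Q)) Wᵀ W (2 • S)
  let U : Matrix (Fin n ⊕ Fin m) (Fin n ⊕ Fin m) ℝ := fromBlocks Q⁻¹ 0 0 S⁻¹
  have hU : IsUnit U := by
    rw [isUnit_fromBlocks_zero₂₁]
    exact ⟨IsUnit.of_mul_eq_one _ hQQ', IsUnit.of_mul_eq_one _ hSS'⟩
  have h1 := PosDef.fromBlocks₁₁ X D hA
  rw [← posSemidef_submatrix_equiv (Equiv.sumAssoc (Fin n) (Fin n) (Fin m)),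
    ← hU.posSemidef_star_left_conjugate_iff, hAinv] at h1
  have hXU : X * U = -fromCols (H + B * (W * Q⁻¹)) B := by
    simp only [X, U, fromCols_mul_fromBlocks]
    ext i (j | j) <;>
    simp [Matrix.add_mul, Matrix.mul_assoc, hQQ, hSS]
  convert h1 using 1
  · apply iff_of_eq
    congr 1
    ext ((i | i) | i) ((j | j) | j) <;> simp [X, D, -transpose_mul, -transpose_add]
  · have e : star U * (D - Xᴴ * (Q⁻¹ * Λ) * X) * U =
        star U * D * U - (X * U)ᴴ * (Q⁻¹ * Λ) * (X * U) := by
      simp only [conjTranspose_mul, star_eq_conjTranspose, Matrix.mul_sub, Matrix.sub_mul,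
        Matrix.mul_assoc]
    rw [e, hXU]
    have hX2 : (-fromCols (H + B * (W * Q⁻¹)) B)ᴴ * (Q⁻¹ * Λ) * (-fromCols (H + B * (W * Q⁻¹)) B)
        = fromBlocks ((H + B * (W * Q⁻¹))ᵀ * Q⁻¹ * Λ * (H + B * (W * Q⁻¹)))
          ((H + B * (W * Q⁻¹))ᵀ * Q⁻¹ * Λ * B)
          (Bᵀ * Q⁻¹ * Λ * (H + B * (W * Q⁻¹))) (Bᵀ * Q⁻¹ * Λ * B) := by
      rw [conjTranspose_neg, Matrix.neg_mul, Matrix.neg_mul, Matrix.mul_neg, neg_neg,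
        conjTranspose_eq_transpose_of_trivial, transpose_fromCols, fromRows_mul,
        fromRows_mul_fromCols]
      simp only [Matrix.mul_assoc]
    have hD2 : star U * D * U = fromBlocks (Real.exp (-μ) • (Q⁻¹ * Λ)) ((W * Q⁻¹)ᵀ * S⁻¹)
        (S⁻¹ * (W * Q⁻¹)) (2 • S⁻¹) := by
      rw [star_eq_conjTranspose, conjTranspose_eq_transpose_of_trivial]
      simp only [U, D, fromBlocks_transpose, fromBlocks_multiply, hQt, hSt, transpose_zero,
        Matrix.zero_mul, Matrix.mul_zero, add_zero, zero_add, transpose_mul, Matrix.mul_smul,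
        Matrix.smul_mul, Matrix.mul_assoc, hQQ, hSS, Matrix.mul_one, smul_zero]
    rw [hX2, hD2]
    apply iff_of_eq
    congr 1
    ext (i | i) (j | j) <;> simp
end
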